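/- arXiv:2109.13692 — 3 statements merged into one kernel-verified Lean document; each statement's English description precedes it below -/
import Mathlib

section
/- Let q be a prime power and let r, δ be positive integers with δ > 1 and m := r + δ - 1 ≤ q. Then any δ-1 columns of the 2(δ-1)×(2m-1) matrix Ĥ are linearly independent over F_q. -/
namespace LRCPaper

noncomputable section Defs

variable {F : Type} [Field F] [Fintype F] [DecidableEq F]

/-- The punctured code of `C` on the coordinate set `S`: delete all coordinates outside `S`. -/
def punctureCode {ι : Type} [Fintype ι] (C : Submodule F (ι → F)) (S : Finset ι) :
    Submodule F ({ x // x ∈ S } → F) :=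
  C.map (LinearMap.funLeft F F (fun j : { x // x ∈ S } => (j : ι)))

/-- Every nonzero codeword of `C` has Hamming weight at least `δ`
(i.e. the minimum distance of `C` is at least `δ`). -/
def minWtGe {ι : Type} [Fintype ι] (C : Submodule F (ι → F)) (δ : ℕ) : Prop :=
  ∀ c ∈ C, c ≠ 0 → δ ≤ hammingNorm c

/-- The minimum Hamming distance of the linear code `C` is exactly `d`. -/
def minDistIs {ι : Type} [Fintype ι] (C : Submodule F (ι → F)) (d : ℕ) : Prop :=
  (∃ c ∈ C, c ≠ 0 ∧ hammingNorm c = d) ∧ minWtGe C d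

/-- The `i`-th code symbol of `C` has `(r, δ)`-locality. -/
def symbolHasLocality {ι : Type} [Fintype ι] (C : Submodule F (ι → F)) (r δ : ℕ) (i : ι) :
    Prop :=
  ∃ S : Finset ι, i ∈ S ∧ S.card ≤ r + δ - 1 ∧ minWtGe (punctureCode C S) δ

/-- `C` is an `(r, δ)`-locally repairable code. -/
def IsLRC {ι : Type} [Fintype ι] (C : Submodule F (ι → F)) (r δ : ℕ) : Prop :=
  ∀ i : ι, symbolHasLocality C r δ i

/-- The right-hand side `n - k + 1 - (⌈k/r⌉ - 1)(δ - 1)` of the Singleton-type bound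
for `(r, δ)`-LRCs, as an integer. -/
def optBound (n k r δ : ℕ) : ℤ :=
  (n : ℤ) - (k : ℤ) + 1 - (⌈(k : ℚ) / (r : ℚ)⌉ - 1) * ((δ : ℤ) - 1)

/-- `C` is an optimal `(r, δ)`-LRC with parameters `[card ι, k, d]`. -/
def IsOptimalLRC {ι : Type} [Fintype ι] (C : Submodule F (ι → F)) (k d r δ : ℕ) : Prop :=
  IsLRC C r δ ∧ Module.finrank F ↥C = k ∧ minDistIs C d ∧
    (d : ℤ) = optBound (Fintype.card ι) k r δ

/-- `C` is an optimal `(r, δ)`-LRC (its minimum distance meets the Singleton-type bound). -/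
def IsOptimalLRCCode {ι : Type} [Fintype ι] (C : Submodule F (ι → F)) (r δ : ℕ) : Prop :=
  IsLRC C r δ ∧ ∃ d : ℕ, minDistIs C d ∧
    (d : ℤ) = optBound (Fintype.card ι) (Module.finrank F ↥C) r δ

/-- The linear map underlying the matrix-product construction: it sends
`(c_1, …, c_M)` to `(∑_ℓ c_ℓ a_{ℓ,1}, …, ∑_ℓ c_ℓ a_{ℓ,N})`. -/
def mpMap {ι : Type} [Fintype ι] {M N : ℕ} (A : Matrix (Fin M) (Fin N) F) :
    (Fin M → ι → F) →ₗ[F] (Fin N × ι → F) where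
  toFun c := fun p => ∑ ℓ : Fin M, c ℓ p.2 * A ℓ p.1
  map_add' x y := by
    funext p
    simp [add_mul, Finset.sum_add_distrib]
  map_smul' a x := by
    funext p
    simp [Finset.mul_sum, mul_assoc]

/-- The matrix-product code `(C_1, …, C_M) · A`, a linear code of length `N * card ι`
with coordinates indexed by `Fin N × ι`. -/
def matrixProductCode {ι : Type} [Fintype ι] {M N : ℕ}
    (Cs : Fin M → Submodule F (ι → F)) (A : Matrix (Fin M) (Fin N) F) :
    Submodule F (Fin N × ι → F) :=
  (Submodule.pi Set.univ Cs).map (mpMap A)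

/-- The linear code of length `N` generated by the first `i` rows of `A`. -/
def rowSpanCode {M N : ℕ} (A : Matrix (Fin M) (Fin N) F) (i : ℕ) :
    Submodule F (Fin N → F) :=
  Submodule.span F {w : Fin N → F | ∃ ℓ : Fin M, (ℓ : ℕ) < i ∧ w = A ℓ}

/-- `A` is nonsingular by columns (NSC): for every `i ≤ M`, every `i × i` submatrix
formed by choosing `i` columns of the first `i` rows of `A` is nonsingular. -/
def IsNSC {M N : ℕ} (A : Matrix (Fin M) (Fin N) F) : Prop :=
  ∀ (i : ℕ) (hi : i ≤ M) (f : Fin i → Fin N), StrictMono f →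
    (Matrix.of fun a b : Fin i => A (Fin.castLE hi a) (f b)).det ≠ 0

/-- Evaluation map underlying generalized Reed–Solomon codes:
`p ↦ (v_1 p(a_1), …, v_n p(a_n))`. -/
def grsMap {n : ℕ} (a v : Fin n → F) : Polynomial F →ₗ[F] (Fin n → F) where
  toFun p := fun i => v i * Polynomial.eval (a i) p
  map_add' p q := by funext i; simp [mul_add]
  map_smul' c p := by funext i; simp [mul_left_comm]

/-- The generalized Reed–Solomon code `GRS_k(a, v)`. -/
def GRSCode {n : ℕ} (k : ℕ) (a v : Fin n → F) : Submodule F (Fin n → F) :=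
  (Polynomial.degreeLT F k).map (grsMap a v)

/-- The set of indices of nonzero columns of `H`. -/
def colSupport {m n : ℕ} (H : Matrix (Fin m) (Fin n) F) : Finset (Fin n) :=
  Finset.univ.filter fun j => ∃ i, H i j ≠ 0

/-- Entry `(i, j)` (0-based) of the `2(δ-1) × (2m-1)` matrix `Ĥ`, built from the distinct
elements `α 0, …, α (m-1)` and nonzero scalars `lam 0, …, lam (m-1)`. -/
def hatEntry (δ m : ℕ) (α lam : ℕ → F) (i j : ℕ) : F :=
  if i < δ - 1 then (if j < m then lam j * α j ^ i else 0)
  else (if m - 1 ≤ j then lam (2 * m - 2 - j) * α (2 * m - 2 - j) ^ (i - (δ - 1)) else 0)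

/-- Entry `(i, j)` (0-based) of the `v(δ-1) × (vm-1)` block-diagonal matrix
`ℋ = H ⊕ ⋯ ⊕ H ⊕ Ĥ` (`v - 2` diagonal copies of `H` followed by `Ĥ`). -/
def calHEntry (δ m v : ℕ) (α lam : ℕ → F) (i j : ℕ) : F :=
  if i < (v - 2) * (δ - 1) then
    (if j < (v - 2) * m ∧ j / m = i / (δ - 1) then lam (j % m) * α (j % m) ^ (i % (δ - 1))
      else 0)
  else
    (if (v - 2) * m ≤ j then hatEntry δ m α lam (i - (v - 2) * (δ - 1)) (j - (v - 2) * m)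
      else 0)

/-- Entry `(i, j)` (0-based) of the `(v(δ-1)+τ) × (vm-1)` matrix `H̃`, obtained by appending
the row block `(A, …, A, Â)` below `ℋ`. -/
def tildeHEntry (δ m v : ℕ) (α lam : ℕ → F) (i j : ℕ) : F :=
  if i < v * (δ - 1) then calHEntry δ m v α lam i j
  else
    lam (if j < (v - 2) * m then j % m
          else (if j - (v - 2) * m < m then j - (v - 2) * m
                else 2 * m - 2 - (j - (v - 2) * m))) *
      α (if j < (v - 2) * m then j % m
          else (if j - (v - 2) * m < m then j - (v - 2) * m
                else 2 * m - 2 - (j - (v - 2) * m))) ^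
        ((δ - 1) + (i - v * (δ - 1)))

end Defs

/-! Only the first `m` columns of `Ĥ` meet its upper half, and among them the upper half restricts
to a column-scaled Vandermonde matrix; among the remaining `m - 1` columns so does the lower half.
Thus `Ĥ` is block triangular, and the chosen columns are independent as soon as at most `δ - 1` of
them lie in each group. -/

section LinearIndependence

variable {R M N ι : Type*}

theorem linearIndepOn_union_of_map_eq_zero [Ring R] [AddCommGroup M] [AddCommGroup N]
    [Module R M] [Module R N] {v : ι → M} {s t : Set ι} (f : M →ₗ[R] N)
    (hs : LinearIndepOn R v s) (hfs : ∀ j ∈ s, f (v j) = 0) (ht : LinearIndepOn R (f ∘ v) t) :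
    LinearIndepOn R v (s ∪ t) := by
  have hker : Submodule.span R (v '' s) ≤ LinearMap.ker f :=
    Submodule.span_le.2 (Set.forall_mem_image.2 hfs)
  exact hs.union_of_quotient (LinearIndepOn.of_comp ((Submodule.span R (v '' s)).liftQ f hker) ht)

variable [CommRing R] [IsDomain R]

theorem linearIndependent_mul_pow [Fintype ι] {d : ℕ} {a c : ι → R} (ha : Function.Injective a)
    (hc : ∀ j, c j ≠ 0) (hd : Fintype.card ι ≤ d) :
    LinearIndependent R fun j (i : Fin d) ↦ c j * a j ^ (i : ℕ) := by
  rw [Fintype.linearIndependent_iff]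
  intro g hg
  let e := (Fintype.equivFin ι).symm
  have hsum (i : Fin (Fintype.card ι)) : ∑ k, g (e k) * c (e k) * a (e k) ^ (i : ℕ) = 0 := by
    rw [e.sum_comp fun j ↦ g j * c j * a j ^ (i : ℕ)]
    simpa [mul_assoc] using congrFun hg (i.castLE hd)
  have hgc := Matrix.eq_zero_of_forall_pow_sum_mul_pow_eq_zero (ha.comp e.injective) hsum
  refine e.surjective.forall.2 fun k ↦ ?_
  exact (mul_eq_zero.1 (congrFun hgc k)).resolve_right (hc _)

theorem linearIndepOn_mul_pow {d : ℕ} {a c : ι → R} {s : Finset ι} (ha : Set.InjOn a s)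
    (hc : ∀ j ∈ s, c j ≠ 0) (hs : s.card ≤ d) :
    LinearIndepOn R (fun j (i : Fin d) ↦ c j * a j ^ (i : ℕ)) s :=
  linearIndependent_mul_pow (ι := s) ha.injective (fun j ↦ hc j j.2) (by simpa using hs)

end LinearIndependence

section Halves

variable (R : Type*) [Semiring R]

/-- The projection of a column of height `2d` to its upper half; with `d = δ - 1` it reads off the
upper block of a column of `Ĥ`. -/
def upperHalf (d : ℕ) : (Fin (2 * d) → R) →ₗ[R] Fin d → R :=
  .funLeft R R (Fin.castLE (Nat.le_mul_of_pos_left d two_pos))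

/-- The projection of a column of height `2d` to its lower half; with `d = δ - 1` it reads off the
lower block of a column of `Ĥ`. -/
def lowerHalf (d : ℕ) : (Fin (2 * d) → R) →ₗ[R] Fin d → R :=
  .funLeft R R fun i ↦ ⟨d + i, by omega⟩

end Halves

section HatMatrix

variable {F : Type} [Field F] {δ m : ℕ} {α lam : ℕ → F}

variable (δ m α lam) in
/-- The matrix `Ĥ` with entries `hatEntry`, over any field and for independent `δ` and `m`. -/
def hatMatrix : Matrix (Fin (2 * (δ - 1))) (Fin (2 * m - 1)) F :=
  .of fun i j ↦ hatEntry δ m α lam i j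

theorem upperHalf_hatMatrix_col_of_lt {j : Fin (2 * m - 1)} (hj : (j : ℕ) < m) :
    upperHalf F (δ - 1) ((hatMatrix δ m α lam).col j) =
      fun i : Fin (δ - 1) ↦ lam j * α j ^ (i : ℕ) := by
  ext i
  simp [upperHalf, LinearMap.funLeft_apply, hatMatrix, hatEntry, hj]

theorem upperHalf_hatMatrix_col_of_le {j : Fin (2 * m - 1)} (hj : m ≤ (j : ℕ)) :
    upperHalf F (δ - 1) ((hatMatrix δ m α lam).col j) = 0 := by
  ext i
  simp [upperHalf, LinearMap.funLeft_apply, hatMatrix, hatEntry, hj.not_gt]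

theorem lowerHalf_hatMatrix_col_of_le_succ {j : Fin (2 * m - 1)} (hj : m ≤ (j : ℕ) + 1) :
    lowerHalf F (δ - 1) ((hatMatrix δ m α lam).col j) =
      fun i : Fin (δ - 1) ↦ lam (2 * m - 2 - j) * α (2 * m - 2 - j) ^ (i : ℕ) := by
  ext i
  simp [lowerHalf, LinearMap.funLeft_apply, hatMatrix, hatEntry, hj]

theorem linearIndepOn_upperHalf_hatMatrix_col {T : Finset (Fin (2 * m - 1))}
    (hα : Set.InjOn α (Set.Iio m)) (hlam : ∀ i < m, lam i ≠ 0) (hT : ∀ j ∈ T, (j : ℕ) < m)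
    (hcard : T.card ≤ δ - 1) :
    LinearIndepOn F (upperHalf F (δ - 1) ∘ (hatMatrix δ m α lam).col) T := by
  have hinj : Set.InjOn (fun j : Fin (2 * m - 1) ↦ α j) T :=
    hα.comp Fin.val_injective.injOn hT
  exact (linearIndepOn_mul_pow hinj (fun j hj ↦ hlam j (hT j hj)) hcard).congr
    fun j hj ↦ (upperHalf_hatMatrix_col_of_lt (hT j hj)).symm

theorem linearIndepOn_lowerHalf_hatMatrix_col {T : Finset (Fin (2 * m - 1))}
    (hα : Set.InjOn α (Set.Iio m)) (hlam : ∀ i < m, lam i ≠ 0) (hT : ∀ j ∈ T, m ≤ (j : ℕ) + 1)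
    (hcard : T.card ≤ δ - 1) :
    LinearIndepOn F (lowerHalf F (δ - 1) ∘ (hatMatrix δ m α lam).col) T := by
  have hlt (j : Fin (2 * m - 1)) (hj : j ∈ T) : 2 * m - 2 - (j : ℕ) < m := by
    have := hT j hj
    omega
  have hinj : Set.InjOn (fun j : Fin (2 * m - 1) ↦ 2 * m - 2 - (j : ℕ)) T := by
    intro j _ k _ hjk
    dsimp only at hjk
    omega
  exact (linearIndepOn_mul_pow (hα.comp hinj hlt) (fun j hj ↦ hlam _ (hlt j hj)) hcard).congr
    fun j hj ↦ (lowerHalf_hatMatrix_col_of_le_succ (hT j hj)).symm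

theorem hat_columns_linearIndependent_general
    (hα : Set.InjOn α (Set.Iio m)) (hlam : ∀ i < m, lam i ≠ 0) {T : Finset (Fin (2 * m - 1))}
    (hlt : (T.filter (·.val < m)).card ≤ δ - 1)
    (hge : (T.filter (m ≤ ·.val)).card ≤ δ - 1) :
    LinearIndepOn F (hatMatrix δ m α lam).col T := by
  have hright : LinearIndepOn F (hatMatrix δ m α lam).col (T.filter (m ≤ ·.val)) := by
    refine (linearIndepOn_lowerHalf_hatMatrix_col hα hlam (fun j hj ↦ ?_) hge).of_comp _
    exact Nat.le_succ_of_le (Finset.mem_filter.1 hj).2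
  have hleft : LinearIndepOn F (upperHalf F (δ - 1) ∘ (hatMatrix δ m α lam).col)
      (T.filter (·.val < m)) :=
    linearIndepOn_upperHalf_hatMatrix_col hα hlam (fun _ hj ↦ (Finset.mem_filter.1 hj).2) hlt
  refine (linearIndepOn_union_of_map_eq_zero (upperHalf F (δ - 1)) hright
    (fun _ hj ↦ upperHalf_hatMatrix_col_of_le (Finset.mem_filter.1 hj).2) hleft).mono ?_
  intro j hj
  simpa [Finset.mem_coe.1 hj] using le_or_gt m (j : ℕ)

end HatMatrix

/-- any `δ - 1` columns of the `2(δ-1) × (2m-1)` matrix `Ĥ` are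
linearly independent over `F_q`, where `m = r + δ - 1 ≤ q`. -/
theorem hat_columns_linearIndependent
    (q : ℕ) (hq : IsPrimePow q)
    (F : Type) [Field F] [Fintype F] [DecidableEq F] (hF : Fintype.card F = q)
    (r δ : ℕ) (hr : 0 < r) (hδ : 1 < δ) (hmq : r + δ - 1 ≤ q)
    (α lam : ℕ → F)
    (hα : ∀ i j : ℕ, i < r + δ - 1 → j < r + δ - 1 → α i = α j → i = j)
    (hlam : ∀ i : ℕ, i < r + δ - 1 → lam i ≠ 0)
    (T : Finset (Fin (2 * (r + δ - 1) - 1))) (hT : T.card = δ - 1) :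
    LinearIndependent F
      (fun j : T => fun i : Fin (2 * (δ - 1)) =>
        hatEntry δ (r + δ - 1) α lam (i : ℕ) (j.1 : ℕ)) :=
  hat_columns_linearIndependent_general (fun i hi j hj ↦ hα i j hi hj) hlam
    ((Finset.card_filter_le _ _).trans hT.le) ((Finset.card_filter_le _ _).trans hT.le)

end LRCPaper
end

section
/- Let q be a prime power and let r, δ, τ, v be positive integers with δ > 1, v > 1, m := r + δ - 1 ≤ q, τ + 1 < r, and τ ≤ δ. Then the (v(δ-1)+τ) × (vm-1) matrix H̃ has rank v(δ-1)+τ over F_q. -/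
namespace LRCPaper

/-!
Let `y` be a linear dependency among the rows of `H̃`. Block `b` of `ℋ` has its own coefficients
`y_{b,0}, …, y_{b,δ-2}`, while the appended rows contribute the same `z_0, …, z_{τ-1}` to every
block. On the column of block `b` at the node `α_k` the dependency reads `λ_k P_b(α_k) = 0`, where
`P_b = ∑ s, y_{b,s} X^s + ∑ t, z_t X^(δ-1+t)`. Apart from the column common to the last two
blocks, every block contains the columns of `m - 1 ≥ δ - 1 + τ > deg P_b` nodes, so all `P_b`
vanish, and with them all coefficients.
-/

section SharedVandermonde

open Matrix

variable {R ι : Type*} [CommRing R] [DecidableEq ι] {e τ : ℕ} {c x : Fin (e + τ) → R}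

/-- The matrix `V ⊕ ⋯ ⊕ V`, with one copy of `V` for each element of `ι`, above the row block
`(W, …, W)`, where `V` and `W` consist of the first `e` and the last `τ` rows of the square
Vandermonde-type matrix with columns `c k • (1, x k, …, x k ^ (e + τ - 1))`. -/
def sharedVandermonde (ι : Type*) [DecidableEq ι] (e τ : ℕ) (c x : Fin (e + τ) → R) :
    Matrix (ι × Fin e ⊕ Fin τ) (ι × Fin (e + τ)) R :=
  fromRows (of fun i j => if i.1 = j.1 then c j.2 * x j.2 ^ (i.2 : ℕ) else 0)
    (of fun t j => c j.2 * x j.2 ^ (e + (t : ℕ)))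

theorem vecMul_sharedVandermonde [Fintype ι] (y : ι × Fin e ⊕ Fin τ → R) (b : ι)
    (k : Fin (e + τ)) :
    (y ᵥ* sharedVandermonde ι e τ c x) (b, k) =
      c k * ∑ j : Fin (e + τ), x k ^ (j : ℕ) *
        Fin.append (fun s => y (.inl (b, s))) (fun t => y (.inr t)) j := by
  simp only [sharedVandermonde, vecMul, dotProduct, Fintype.sum_sum_type, Fintype.sum_prod_type,
    fromRows_apply_inl, fromRows_apply_inr, of_apply, Fin.sum_univ_add, Fin.append_left,
    Fin.append_right, Fin.val_castAdd, Fin.val_natAdd, mul_add, Finset.mul_sum]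
  congr 1
  · rw [Finset.sum_eq_single b (fun b' _ hb' => by simp [hb']) (by simp)]
    exact Finset.sum_congr rfl fun s _ => by simp only [if_true]; ring
  · exact Finset.sum_congr rfl fun t _ => by ring

theorem linearIndependent_row_sharedVandermonde [IsDomain R] [Finite ι] [Nonempty ι]
    (hx : Function.Injective x) (hc : ∀ k, c k ≠ 0) :
    LinearIndependent R (sharedVandermonde ι e τ c x).row := by
  cases nonempty_fintype ι
  rw [← vecMul_injective_iff]
  refine (injective_iff_map_eq_zero (sharedVandermonde ι e τ c x).vecMulLinear).2 fun y hy => ?_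
  have append_eq_zero (b : ι) :
      Fin.append (fun s => y (.inl (b, s))) (fun t => y (.inr t)) = 0 :=
    eq_zero_of_forall_index_sum_pow_mul_eq_zero hx fun k =>
      have hbk := (vecMul_sharedVandermonde y b k).symm.trans (congrFun hy (b, k))
      (mul_eq_zero.1 hbk).resolve_left (hc k)
  funext i
  rcases i with ⟨b, s⟩ | t
  · simpa using congrFun (append_eq_zero b) (Fin.castAdd τ s)
  · simpa using congrFun (append_eq_zero (Classical.arbitrary ι)) (Fin.natAdd e t)

end SharedVandermonde

theorem add_mul_lt_mul_iff {s e b w : ℕ} (hs : s < e) : s + e * b < w * e ↔ b < w := by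
  have he : 0 < e := by omega
  rw [← Nat.div_lt_iff_lt_mul he, Nat.add_mul_div_left _ _ he, Nat.div_eq_of_lt hs, zero_add]

/-- The position in `H̃` of the column of block `b < v` at the node `α k`, for `k < m - 1`. The
last block lists its nodes in reverse order, after the column shared with the previous block. -/
def tildeHCol (m v b k : ℕ) : ℕ :=
  if b + 1 < v then k + m * b else 2 * m - 2 - k + m * (v - 2)

theorem tildeHCol_lt {m v b k : ℕ} (hv : 1 < v) (hk : k + 1 < m) :
    tildeHCol m v b k < v * m - 1 := by
  obtain ⟨w, rfl⟩ := Nat.exists_eq_add_of_lt hv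
  unfold tildeHCol
  split_ifs with h
  · have : m * b ≤ m * w := Nat.mul_le_mul_left m (by omega)
    grind
  · grind

section Entries

variable {F : Type} [Field F] {δ m v w b b' k s : ℕ} (α lam : ℕ → F)

theorem hatEntry_left (hk : k + 1 < m) (i : ℕ) :
    hatEntry δ m α lam i k = if i < δ - 1 then lam k * α k ^ i else 0 := by
  grind [hatEntry]

theorem hatEntry_right (hk : k + 1 < m) (i : ℕ) :
    hatEntry δ m α lam i (2 * m - 2 - k) =
      if i < δ - 1 then 0 else lam k * α k ^ (i - (δ - 1)) := by
  grind [hatEntry]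

theorem calHEntry_block (hs : s < δ - 1) (hk : k < m) (hb : b < w) :
    calHEntry δ m (w + 2) α lam (s + (δ - 1) * b') (k + m * b) =
      if b' = b then lam k * α k ^ s else 0 := by
  have hbm : k + m * b < w * m := (add_mul_lt_mul_iff hk).2 hb
  have he : 0 < δ - 1 := by omega
  have hm : 0 < m := by omega
  simp only [calHEntry, Nat.add_sub_cancel, add_mul_lt_mul_iff hs, hbm, hbm.not_ge, true_and,
    if_false, Nat.add_mul_div_left _ _ he, Nat.add_mul_div_left _ _ hm, Nat.add_mul_mod_self_left,
    Nat.div_eq_of_lt hs, Nat.div_eq_of_lt hk, Nat.mod_eq_of_lt hs, Nat.mod_eq_of_lt hk, zero_add]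
  grind

theorem calHEntry_hat (hs : s < δ - 1) (j : ℕ) :
    calHEntry δ m (w + 2) α lam (s + (δ - 1) * b') (j + m * w) =
      if b' < w then 0 else hatEntry δ m α lam (s + (δ - 1) * (b' - w)) j := by
  have hj : w * m ≤ j + m * w := by grind
  have hcol : j + m * w - w * m = j := by grind
  simp only [calHEntry, Nat.add_sub_cancel, add_mul_lt_mul_iff hs, hj, hj.not_gt, false_and,
    if_false, if_true, hcol]
  split_ifs with h
  · rfl
  · obtain ⟨d, rfl⟩ := Nat.exists_eq_add_of_le (not_lt.1 h)
    rw [Nat.add_sub_cancel_left, mul_add, mul_comm w]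
    congr 1
    omega

theorem calHEntry_tildeHCol (hs : s < δ - 1) (hb' : b' < v) (hv : 1 < v) (hb : b < v)
    (hk : k + 1 < m) :
    calHEntry δ m v α lam (s + (δ - 1) * b') (tildeHCol m v b k) =
      if b' = b then lam k * α k ^ s else 0 := by
  obtain ⟨w, rfl⟩ : ∃ w, v = w + 2 := ⟨v - 2, by omega⟩
  obtain hbw | rfl | rfl : b < w ∨ b = w ∨ b = w + 1 := by omega
  · rw [tildeHCol, if_pos (by omega), calHEntry_block α lam hs (by omega) hbw]
  · rw [tildeHCol, if_pos (by omega), calHEntry_hat α lam hs k, hatEntry_left α lam hk]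
    obtain hb'w | rfl | rfl : b' < b ∨ b' = b ∨ b' = b + 1 := by omega
    · simp [hb'w, hb'w.ne]
    · simp [hs]
    · simp
  · rw [tildeHCol, if_neg (by omega), Nat.add_sub_cancel, calHEntry_hat α lam hs,
      hatEntry_right α lam hk]
    obtain hb'w | rfl | rfl : b' < w ∨ b' = w ∨ b' = w + 1 := by omega
    · simp [hb'w, (hb'w.trans w.lt_succ_self).ne]
    · simp [hs]
    · simp

theorem tildeHEntry_local_row (hs : s < δ - 1) (hb' : b' < v) (hv : 1 < v) (hb : b < v)
    (hk : k + 1 < m) :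
    tildeHEntry δ m v α lam (s + (δ - 1) * b') (tildeHCol m v b k) =
      if b' = b then lam k * α k ^ s else 0 := by
  rw [tildeHEntry, if_pos ((add_mul_lt_mul_iff hs).2 hb'),
    calHEntry_tildeHCol α lam hs hb' hv hb hk]

theorem tildeHEntry_global_row (hk : k + 1 < m) (t : ℕ) :
    tildeHEntry δ m v α lam (v * (δ - 1) + t) (tildeHCol m v b k) =
      lam k * α k ^ (δ - 1 + t) := by
  have hnode : (if tildeHCol m v b k < (v - 2) * m then tildeHCol m v b k % m
      else if tildeHCol m v b k - (v - 2) * m < m then tildeHCol m v b k - (v - 2) * m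
      else 2 * m - 2 - (tildeHCol m v b k - (v - 2) * m)) = k := by
    obtain hb | hb | hb : b < v - 2 ∨ b = v - 2 ∨ v - 2 < b := by omega
    · have hcol : tildeHCol m v b k = k + m * b := if_pos (by omega)
      rw [hcol, if_pos ((add_mul_lt_mul_iff (by omega)).2 hb), Nat.add_mul_mod_self_left,
        Nat.mod_eq_of_lt (by omega)]
    · grind [tildeHCol]
    · grind [tildeHCol]
  rw [tildeHEntry, if_neg (by omega), hnode, Nat.add_sub_cancel_left]

end Entries

theorem tildeH_rank_general {F : Type} [Field F] {δ m τ v : ℕ} (hδ : 0 < δ) (hv : 1 < v)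
    (hm : δ + τ ≤ m) {α lam : ℕ → F} (hα : Set.InjOn α (Set.Iio (δ - 1 + τ)))
    (hlam : ∀ k < δ - 1 + τ, lam k ≠ 0) :
    (Matrix.of fun (i : Fin (v * (δ - 1) + τ)) (j : Fin (v * m - 1)) =>
      tildeHEntry δ m v α lam i j).rank = v * (δ - 1) + τ := by
  set H := Matrix.of fun (i : Fin (v * (δ - 1) + τ)) (j : Fin (v * m - 1)) =>
    tildeHEntry δ m v α lam i j
  have : Nonempty (Fin v) := ⟨0, by omega⟩
  have hk (k : Fin (δ - 1 + τ)) : (k : ℕ) + 1 < m := by omega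
  let row : Fin v × Fin (δ - 1) ⊕ Fin τ → Fin (v * (δ - 1) + τ) :=
    finSumFinEquiv ∘ Sum.map finProdFinEquiv id
  let col : Fin v × Fin (δ - 1 + τ) → Fin (v * m - 1) := fun j =>
    ⟨tildeHCol m v j.1 j.2, tildeHCol_lt hv (hk j.2)⟩
  have submatrix_eq : H.submatrix row col =
      sharedVandermonde (Fin v) (δ - 1) τ (fun k => lam k) (fun k => α k) := by
    ext (⟨b', s⟩ | t) ⟨b, k⟩
    · refine (tildeHEntry_local_row α lam s.2 b'.2 hv b.2 (hk k)).trans ?_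
      simp [sharedVandermonde, Fin.ext_iff]
    · exact tildeHEntry_global_row α lam (hk k) t
  refine le_antisymm H.rank_le_height ?_
  calc v * (δ - 1) + τ = (H.submatrix row col).rank := by
        rw [submatrix_eq, (linearIndependent_row_sharedVandermonde
          (fun k l h => Fin.ext (hα k.2 l.2 h)) (fun k => hlam k k.2)).rank_matrix]
        simp
    _ ≤ H.rank := H.rank_submatrix_le row col

/-- the `(v(δ-1)+τ) × (vm-1)` matrix `H̃` has rank `v(δ-1) + τ`
over `F_q`, where `m = r + δ - 1 ≤ q`, `v > 1`, `τ + 1 < r` and `τ ≤ δ`. -/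
theorem tildeH_rank
    (q : ℕ) (hq : IsPrimePow q)
    (F : Type) [Field F] [Fintype F] [DecidableEq F] (hF : Fintype.card F = q)
    (r δ τ v : ℕ) (hr : 0 < r) (hδ : 1 < δ) (hτ : 0 < τ) (hv : 1 < v)
    (hmq : r + δ - 1 ≤ q) (hτr : τ + 1 < r) (hτδ : τ ≤ δ)
    (α lam : ℕ → F)
    (hα : ∀ i j : ℕ, i < r + δ - 1 → j < r + δ - 1 → α i = α j → i = j)
    (hlam : ∀ i : ℕ, i < r + δ - 1 → lam i ≠ 0) :
    Matrix.rank
        (Matrix.of fun (i : Fin (v * (δ - 1) + τ)) (j : Fin (v * (r + δ - 1) - 1)) =>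
          tildeHEntry δ (r + δ - 1) v α lam (i : ℕ) (j : ℕ))
      = v * (δ - 1) + τ :=
  tildeH_rank_general (by omega) hv (by omega)
    (fun i (hi : i < δ - 1 + τ) j (hj : j < δ - 1 + τ) => hα i j (by omega) (by omega))
    (fun k _ => hlam k (by omega))

end LRCPaper
end

section
/- Let M and N be integers with 1 < M ≤ N and let q be a prime power. There exists an M×N nonsingular-by-columns (NSC) matrix over F_q if and only if N ≤ q. -/
namespace LRCPaper

/-!
The first two rows of an NSC matrix list `N` points of the projective line over `F`: nonsingularity
of the `2 × 2` minors makes them distinct, and nonsingularity of the `1 × 1` minors keeps them away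
from the point at infinity, so at most `#F` of them fit. Conversely, for distinct scalars `x j` each
minor of the matrix `(x j ^ a)` in its leading rows is a Vandermonde determinant.
-/

section

variable {F : Type} [Field F] {M N : ℕ}

theorem IsNSC.det_submatrix_ne_zero {A : Matrix (Fin M) (Fin N) F} (hA : IsNSC A) {i : ℕ}
    (hi : i ≤ M) {f : Fin i → Fin N} (hf : Function.Injective f) :
    (A.submatrix (Fin.castLE hi) f).det ≠ 0 := by
  have hmono : StrictMono (f ∘ Tuple.sort f) :=
    (Tuple.monotone_sort f).strictMono_of_injective (hf.comp (Tuple.sort f).injective)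
  have hdet : ((A.submatrix (Fin.castLE hi) f).submatrix id (Tuple.sort f)).det ≠ 0 :=
    hA i hi (f ∘ Tuple.sort f) hmono
  rw [Matrix.det_permute'] at hdet
  exact right_ne_zero_of_mul hdet

theorem IsNSC.firstRow_ne_zero {A : Matrix (Fin M) (Fin N) F} (hA : IsNSC A) (hM : 1 ≤ M)
    (j : Fin N) : A (Fin.castLE hM 0) j ≠ 0 := by
  simpa only [Matrix.det_fin_one, Matrix.submatrix_apply] using
    hA.det_submatrix_ne_zero hM (Function.injective_of_subsingleton fun _ => j)

theorem IsNSC.injective_secondRow_div_firstRow {A : Matrix (Fin M) (Fin N) F} (hA : IsNSC A)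
    (hM : 2 ≤ M) :
    Function.Injective fun j => A (Fin.castLE hM 1) j / A (Fin.castLE hM 0) j := by
  have hM₁ : 1 ≤ M := one_le_two.trans hM
  intro j k hjk
  by_contra hne
  have hcross : A (Fin.castLE hM 1) j * A (Fin.castLE hM 0) k =
      A (Fin.castLE hM 1) k * A (Fin.castLE hM 0) j :=
    (div_eq_div_iff (hA.firstRow_ne_zero hM₁ j) (hA.firstRow_ne_zero hM₁ k)).1 hjk
  apply hA.det_submatrix_ne_zero hM (injective_pair_iff_ne.2 hne)
  calc (A.submatrix (Fin.castLE hM) ![j, k]).det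
      = A (Fin.castLE hM 0) j * A (Fin.castLE hM 1) k
        - A (Fin.castLE hM 0) k * A (Fin.castLE hM 1) j := Matrix.det_fin_two _
    _ = 0 := by linear_combination -hcross

theorem isNSC_pow_of_injective {x : Fin N → F} (hx : Function.Injective x) :
    IsNSC (Matrix.of fun (a : Fin M) j => x j ^ (a : ℕ)) := by
  intro i _ f hf
  change (Matrix.vandermonde (x ∘ f)).transpose.det ≠ 0
  rw [Matrix.det_transpose]
  exact Matrix.det_vandermonde_ne_zero_iff.2 (hx.comp hf.injective)

theorem exists_nsc_iff_general (hM : 1 < M) :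
    (∃ A : Matrix (Fin M) (Fin N) F, IsNSC A) ↔ (N : Cardinal) ≤ Cardinal.mk F := by
  rw [← Cardinal.mk_fin, Cardinal.le_def]
  constructor
  · rintro ⟨A, hA⟩
    exact ⟨⟨_, hA.injective_secondRow_div_firstRow hM⟩⟩
  · rintro ⟨x⟩
    exact ⟨_, isNSC_pow_of_injective x.injective⟩

end

/-- for `1 < M ≤ N`, there exists an `M × N` NSC matrix over `F_q`
if and only if `N ≤ q`. -/
theorem exists_nsc_iff
    (q : ℕ) (hq : IsPrimePow q)
    (F : Type) [Field F] [Fintype F] [DecidableEq F] (hF : Fintype.card F = q)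
    (M N : ℕ) (hM : 1 < M) (hMN : M ≤ N) :
    (∃ A : Matrix (Fin M) (Fin N) F, IsNSC A) ↔ N ≤ q := by
  rw [exists_nsc_iff_general hM, Cardinal.mk_fintype, hF, Nat.cast_le]

end LRCPaper
end
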